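/- If q is odd and (q+1)/2 ≤ k ≤ q-1, then the minimum Hamming distance of the puncture code P(C) of the [q^2+1, k, q^2+2-k]_{q^2} Reed-Solomon code C is exactly (q+1)(k - (q-1)/2). -/

import Mathlib

open Polynomial

/-- The codeword of the (extended) `k`-dimensional Reed-Solomon code of length `q² + 1`
associated to a polynomial `f`: the evaluations of `f` at all elements of the field
(enumerated by `a`), followed by the coefficient of `X^(k-1)` in `f`. -/
def rsWord (q k : ℕ) {F : Type} [Field F] (a : Fin (q ^ 2) → F)
    (f : Polynomial F) (i : Fin (q ^ 2 + 1)) : F :=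
  if hi : (i : ℕ) < q ^ 2 then f.eval (a ⟨(i : ℕ), hi⟩) else f.coeff (k - 1)

/-- The puncture code `P(C)` of the `k`-dimensional Reed-Solomon code `C` of length `q² + 1`
over `F = 𝔽_{q²}`: all vectors `λ` with entries in the subfield `𝔽_q` (i.e. `λ_i^q = λ_i`)
such that `∑ λ_i u_i v_i^q = 0` for all codewords `u, v` of `C`. -/
def puncRS (q k : ℕ) {F : Type} [Field F] [Fintype F] (a : Fin (q ^ 2) → F) :
    Set (Fin (q ^ 2 + 1) → F) :=
  {lam | (∀ i, lam i ^ q = lam i) ∧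
    ∀ f g : Polynomial F, f.degree < (k : WithBot ℕ) → g.degree < (k : WithBot ℕ) →
      ∑ i, lam i * rsWord q k a f i * (rsWord q k a g i) ^ q = 0}

/-- The Hamming weight of a vector: the number of its nonzero coordinates. -/
noncomputable def wt {n : ℕ} {F : Type} [Zero F] (v : Fin n → F) : ℕ :=
  Set.ncard {i | v i ≠ 0}

/-!
Write `q = 2h + 1` and `k = h + s + 1`, so the claimed distance is `2(h + 1)(s + 1)`.

*Lower bound.* Consider the monomials `X^(c + bq)` with `c ≤ h` and `b ≤ s`. On `𝔽_{q²}` the product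
`x^(c + bq) (x^(c' + b'q))^q` equals `x^(c + b') (x^(c' + b))^q`, and `c + b', c' + b ≤ k - 1`.
Hence these monomials span an isotropic space for the Hermitian form with weights `λ ∈ P(C)`, and
at most `wt λ / 2` of them can be independent on the support of `λ`. As the `n`-th such exponent
is at most `2n`, a nonzero word `λ` of weight below `2(h + 1)(s + 1)` would allow more.

*Attainment.* Let `W = X^(h + 1) ∏_{c ∈ R} (X^(q + 1) - c)` with `R` a set of `h`-th roots of unity,
and take `λ_x = Tr W(x) = W(x) + W(x)^q`. If `|R| ≤ h - s - 1`, then `W f g^q` has degree below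
`q² - 1` whenever `deg f, deg g < k`, so its values sum to zero. Moreover
`Tr W(x) = (1 + N(x)^h) W(x)` with `N(x) = x^(q + 1)`, so only the `x` whose norm is an `h`-th root
of unity outside `R` contribute to the weight.
-/

/-! ### Fields -/

lemma ncard_setOf_pow_mem_le {R : Type*} [CommRing R] [IsDomain R] {n : ℕ} (hn : 0 < n)
    (T : Finset R) : {x | x ^ n ∈ T}.ncard ≤ T.card * n := by
  classical
  have hunion : {x | x ^ n ∈ T} = ↑(T.biUnion fun c => (nthRoots n c).toFinset) := by
    ext x
    simp [mem_nthRoots hn]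
  rw [hunion, Set.ncard_coe_finset]
  exact Finset.card_biUnion_le_card_mul _ _ _ fun c _ =>
    (Multiset.toFinset_card_le _).trans (card_nthRoots n c)

lemma natDegree_le_pred_of_degree_lt {R : Type*} [Semiring R] {f : R[X]} {k : ℕ}
    (hf : f.degree < k) : f.natDegree ≤ k - 1 := by
  rcases eq_or_ne f 0 with rfl | hf0
  · exact Nat.zero_le _
  · exact Nat.le_sub_one_of_lt ((natDegree_lt_iff_degree_lt hf0).2 hf)

section FiniteField

variable {F : Type*} [Field F] [Fintype F]

lemma exists_ringEquiv_eq_pow {q n : ℕ} (hn : n ≠ 0) (hF : Fintype.card F = q ^ n) :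
    ∃ σ : F ≃+* F, ∀ x, σ x = x ^ q := by
  obtain ⟨p, m, hp, -, rfl⟩ : IsPrimePow q :=
    (isPrimePow_pow_iff hn).1 (hF ▸ FiniteField.isPrimePow_card F)
  have : Fact p.Prime := ⟨hp.nat_prime⟩
  have : CharP F p := charP_of_card_eq_prime_pow (hF.trans (pow_mul p m n).symm)
  exact ⟨iterateFrobeniusEquiv F p m, iterateFrobeniusEquiv_def F p m⟩

lemma pow_pow_eq_self {q : ℕ} (hF : Fintype.card F = q ^ 2) (x : F) : (x ^ q) ^ q = x := by
  rw [← pow_mul, ← sq, ← hF, FiniteField.pow_card]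

lemma sum_eval_eq_zero_of_natDegree_lt {P : F[X]} (hP : P.natDegree < Fintype.card F - 1) :
    ∑ x, P.eval x = 0 := by
  simp only [eval_eq_sum_range]
  rw [Finset.sum_comm]
  refine Finset.sum_eq_zero fun i hi => ?_
  have hi : i < Fintype.card F - 1 := (Finset.mem_range_succ_iff.1 hi).trans_lt hP
  rw [← Finset.mul_sum, FiniteField.sum_pow_lt_card_sub_one F i hi, mul_zero]

end FiniteField

/-! ### Weights and isotropic families -/

section Weight

variable {F : Type} {n : ℕ}

lemma wt_pos [Zero F] {v : Fin n → F} (hv : v ≠ 0) : 0 < wt v :=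
  (Set.ncard_pos (Set.toFinite _)).2 (Function.ne_iff.1 hv)

lemma wt_eq_card_subtype [Zero F] (v : Fin n → F) [Fintype {i // v i ≠ 0}] :
    wt v = Fintype.card {i // v i ≠ 0} := by
  rw [wt, ← Nat.card_coe_set_eq, ← Nat.card_eq_fintype_card]
  rfl

lemma wt_eq_wt_init_add [Zero F] [DecidableEq F] (v : Fin (n + 1) → F) :
    wt v = wt (Fin.init v) + if v (Fin.last n) ≠ 0 then 1 else 0 := by
  simp only [wt, Set.ncard_eq_toFinset_card', Set.toFinset_ofPred, Finset.card_filter,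
    Fin.sum_univ_castSucc, Fin.init]

lemma two_mul_card_le_wt_of_isotropic [Field F] {κ : Type*} [Fintype κ] (σ : F ≃+* F)
    {v : Fin n → F} {u : κ → Fin n → F}
    (hu : LinearIndependent F fun m (i : {i // v i ≠ 0}) => u m i)
    (hiso : ∀ m m', ∑ i, v i * (u m i * σ (u m' i)) = 0) :
    2 * Fintype.card κ ≤ wt v := by
  classical
  let A : Matrix κ {i // v i ≠ 0} F := fun m i => u m i
  let D : Matrix {i // v i ≠ 0} {i // v i ≠ 0} F := Matrix.diagonal fun i => v i
  have hAσ : LinearIndependent F (A.map σ).row :=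
    LinearIndependent.map_of_surjective_injective (v := A.row) hu σ
      (σ.toAddEquiv.toAddMonoidHom.compLeft _) σ.surjective
      (fun w hw => funext fun i => σ.map_eq_zero_iff.1 (congrFun hw i))
      (fun r w => funext fun i => map_mul σ r (w i))
  have hD : IsUnit D.det := by
    rw [Matrix.det_diagonal, isUnit_iff_ne_zero]
    exact Finset.prod_ne_zero_iff.2 fun i _ => i.2
  have hmul : A * D * (A.map σ).transpose = 0 := by
    ext m m'
    calc (A * D * (A.map σ).transpose) m m'
        = ∑ i : {i // v i ≠ 0}, v i * (u m i * σ (u m' i)) := by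
          rw [Matrix.mul_apply]
          refine Finset.sum_congr rfl fun i _ => ?_
          rw [Matrix.mul_diagonal, Matrix.transpose_apply, Matrix.map_apply]
          ring
      _ = ∑ i with v i ≠ 0, v i * (u m i * σ (u m' i)) :=
          (Finset.sum_subtype {i | v i ≠ 0} (by simp) fun i => v i * (u m i * σ (u m' i))).symm
      _ = ∑ i, v i * (u m i * σ (u m' i)) :=
          Finset.sum_filter_of_ne fun i _ => left_ne_zero_of_mul
      _ = 0 := hiso m m'
  have hrank := Matrix.rank_add_rank_le_card_of_mul_eq_zero hmul
  rw [Matrix.rank_mul_eq_left_of_isUnit_det D A hD, Matrix.rank_transpose,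
    LinearIndependent.rank_matrix (M := A) hu, hAσ.rank_matrix, ← wt_eq_card_subtype] at hrank
  omega

end Weight

/-! ### Exponents with small lowest digit -/

/-- The `n`-th natural number, counting from `0`, whose lowest base-`q` digit is at most `r`
(for `r < q`). -/
def smallDigitNat (q r n : ℕ) : ℕ := n % (r + 1) + n / (r + 1) * q

section SmallDigitNat

variable {q r n : ℕ}

lemma add_mul_inj_of_lt {c c' b b' : ℕ} (hc : c < q) (hc' : c' < q) :
    c + b * q = c' + b' * q ↔ c = c' ∧ b = b' := by
  refine ⟨fun h => ?_, by rintro ⟨rfl, rfl⟩; rfl⟩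
  have hq : 0 < q := by omega
  have hmod := congrArg (· % q) h
  have hdiv := congrArg (· / q) h
  simp only [Nat.add_mul_mod_self_right, Nat.add_mul_div_right _ _ hq, Nat.mod_eq_of_lt,
    Nat.div_eq_of_lt, hc, hc', zero_add] at hmod hdiv
  exact ⟨hmod, hdiv⟩

lemma smallDigitNat_injective (hr : r < q) : Function.Injective (smallDigitNat q r) := by
  intro m n hmn
  have hlt (l : ℕ) : l % (r + 1) < q := (Nat.mod_lt l r.succ_pos).trans_le hr
  obtain ⟨hmod, hdiv⟩ := (add_mul_inj_of_lt (hlt m) (hlt n)).1 hmn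
  rw [← Nat.mod_add_div m (r + 1), hmod, hdiv, Nat.mod_add_div]

lemma smallDigitNat_le_two_mul (hq : q ≤ 2 * r + 2) : smallDigitNat q r n ≤ 2 * n := by
  have hn := Nat.mod_add_div n (r + 1)
  have hmul := Nat.mul_le_mul_left (n / (r + 1)) hq
  unfold smallDigitNat
  linarith [Nat.zero_le (n % (r + 1))]

lemma smallDigitNat_lt_two_mul (hq : q ≤ 2 * r + 1) (hn0 : 0 < n) :
    smallDigitNat q r n < 2 * n := by
  have hn := Nat.mod_add_div n (r + 1)
  have hmul := Nat.mul_le_mul_left (n / (r + 1)) hq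
  have hpos : 0 < n % (r + 1) + n / (r + 1) := by
    by_contra! hzero
    obtain ⟨hmod, hdiv⟩ := Nat.add_eq_zero_iff.1 (Nat.le_zero.1 hzero)
    rw [hmod, hdiv] at hn
    omega
  unfold smallDigitNat
  linarith

lemma smallDigitNat_mul_add (s : ℕ) : smallDigitNat q r (s * (r + 1) + r) = r + s * q := by
  have hr : r < r + 1 := r.lt_succ_self
  rw [smallDigitNat, add_comm (s * _), Nat.add_mul_mod_self_right,
    Nat.add_mul_div_right _ _ r.succ_pos, Nat.mod_eq_of_lt hr, Nat.div_eq_of_lt hr, zero_add]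

end SmallDigitNat

/-! ### The lower bound -/

section LowerBound

variable {F : Type} [Field F] {q k : ℕ} {a : Fin (q ^ 2) → F}

lemma rsWord_castSucc (f : F[X]) (j : Fin (q ^ 2)) :
    rsWord q k a f j.castSucc = f.eval (a j) := by
  simp [rsWord]

lemma rsWord_last (f : F[X]) : rsWord q k a f (Fin.last _) = f.coeff (k - 1) := by
  simp [rsWord]

lemma rsWord_sum_C_mul {κ : Type*} (I : Finset κ) (c : κ → F) (p : κ → F[X])
    (i : Fin (q ^ 2 + 1)) :
    rsWord q k a (∑ m ∈ I, C (c m) * p m) i = ∑ m ∈ I, c m * rsWord q k a (p m) i := by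
  unfold rsWord
  split_ifs
  · simp only [eval_finsetSum, eval_mul, eval_C]
  · simp only [finsetSum_coeff, coeff_C_mul]

lemma eq_zero_of_rsWord_eq_zero (ha : Function.Injective a) {v : Fin (q ^ 2 + 1) → F} {P : F[X]}
    (hcoeff : ∀ n, P.coeff n ≠ 0 → n < wt (Fin.init v) ∨ v (Fin.last _) ≠ 0 ∧ n = k - 1)
    (hP : ∀ i, v i ≠ 0 → rsWord q k a P i = 0) : P = 0 := by
  classical
  let S : Finset (Fin (q ^ 2)) := {j | Fin.init v j ≠ 0}
  have hS : S.card = wt (Fin.init v) := by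
    rw [wt, Set.ncard_eq_toFinset_card', Set.toFinset_ofPred]
  refine eq_zero_of_degree_lt_of_eval_index_eq_zero S ha.injOn ?_ fun j hj => ?_
  · rw [hS, degree_lt_iff_coeff_zero]
    intro n hn
    by_contra hne
    obtain hlt | ⟨hlast, rfl⟩ := hcoeff n hne
    · omega
    · exact hne ((rsWord_last P).symm.trans (hP _ hlast))
  · rw [← rsWord_castSucc (k := k)]
    exact hP _ (Finset.mem_filter.1 hj).2

lemma linearIndependent_rsWord_X_pow (ha : Function.Injective a) {v : Fin (q ^ 2 + 1) → F}
    {κ : Type*} {e : κ → ℕ} (he : Function.Injective e)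
    (hlt : ∀ m, e m < wt (Fin.init v) ∨ v (Fin.last _) ≠ 0 ∧ e m = k - 1) :
    LinearIndependent F fun m (i : {i // v i ≠ 0}) => rsWord q k a (X ^ e m) i := by
  classical
  rw [linearIndependent_iff']
  intro I c hc m hm
  let P : F[X] := ∑ n ∈ I, C (c n) * X ^ e n
  have hcoeff : P.coeff (e m) = c m := by
    simp [P, coeff_X_pow, he.eq_iff, hm]
  have hP : P = 0 := by
    refine eq_zero_of_rsWord_eq_zero (k := k) ha (v := v) (fun n hn => ?_) fun i hi => ?_
    · obtain ⟨l, rfl⟩ : ∃ l, e l = n := by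
        by_contra! hne
        exact hn (by simp [P, coeff_X_pow, fun l => (hne l).symm])
      exact hlt l
    · rw [rsWord_sum_C_mul]
      simpa using congrFun hc ⟨i, hi⟩
  rw [← hcoeff, hP, coeff_zero]

variable [Fintype F] {r s : ℕ} {lam : Fin (q ^ 2 + 1) → F}

lemma rsWord_X_pow_mul_pow (hF : Fintype.card F = q ^ 2) (hr : r < q) {b b' c c' : ℕ}
    (hb : b ≤ s) (hb' : b' ≤ s) (hc : c ≤ r) (hc' : c' ≤ r) (i : Fin (q ^ 2 + 1)) :
    rsWord q (r + s * q + 1) a (X ^ (c + b * q)) i *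
        rsWord q (r + s * q + 1) a (X ^ (c' + b' * q)) i ^ q =
      rsWord q (r + s + 1) a (X ^ (c + b')) i * rsWord q (r + s + 1) a (X ^ (c' + b)) i ^ q := by
  have hq : q ≠ 0 := by omega
  cases i using Fin.lastCases with
  | cast j =>
    simp only [rsWord_castSucc, eval_pow, eval_X]
    generalize a j = x
    calc x ^ (c + b * q) * (x ^ (c' + b' * q)) ^ q
        = x ^ (c + b * q) * x ^ (c' * q) * ((x ^ q) ^ q) ^ b' := by ring
      _ = x ^ (c + b') * (x ^ (c' + b)) ^ q := by rw [pow_pow_eq_self hF]; ring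
  | last =>
    simp only [rsWord_last, coeff_X_pow, Nat.add_sub_cancel, ite_pow, one_pow, zero_pow hq,
      add_mul_inj_of_lt hr (hc.trans_lt hr), add_mul_inj_of_lt hr (hc'.trans_lt hr),
      ← ite_and, mul_ite, mul_one, mul_zero]
    -- Both sides are the indicator of `c = c' = r`, `b = b' = s`.
    congr 1
    apply propext
    omega

lemma two_mul_card_le_wt_of_mem_puncRS (hF : Fintype.card F = q ^ 2) (ha : Function.Injective a)
    (hr : r < q) (hlam : lam ∈ puncRS q (r + s + 1) a) (I : Finset ℕ)
    (hI : ∀ n ∈ I, n ≤ s * (r + 1) + r ∧ (smallDigitNat q r n < wt (Fin.init lam) ∨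
      lam (Fin.last _) ≠ 0 ∧ n = s * (r + 1) + r)) :
    2 * I.card ≤ wt lam := by
  obtain ⟨σ, hσ⟩ := exists_ringEquiv_eq_pow two_ne_zero hF
  have hmod (n : ℕ) : n % (r + 1) ≤ r := Nat.lt_succ_iff.1 (Nat.mod_lt n r.succ_pos)
  have hdiv (n : I) : (n : ℕ) / (r + 1) ≤ s := by
    rw [← Nat.lt_succ_iff, Nat.div_lt_iff_lt_mul r.succ_pos]
    have := (hI n n.2).1
    grind
  have hindep : LinearIndependent F fun (n : I) (i : {i // lam i ≠ 0}) =>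
      rsWord q (r + s * q + 1) a (X ^ smallDigitNat q r n) i := by
    refine linearIndependent_rsWord_X_pow ha
      ((smallDigitNat_injective hr).comp Subtype.val_injective) fun n => ?_
    refine (hI n n.2).2.imp_right fun ⟨hlast, hn⟩ => ⟨hlast, ?_⟩
    rw [hn, smallDigitNat_mul_add, Nat.add_sub_cancel]
  rw [← Fintype.card_coe I]
  refine two_mul_card_le_wt_of_isotropic σ hindep fun m n => ?_
  have hdeg {b c : ℕ} (hb : b ≤ s) (hc : c ≤ r) :
      (X ^ (c + b) : F[X]).degree < ((r + s + 1 : ℕ) : WithBot ℕ) := by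
    rw [degree_X_pow]
    exact_mod_cast (by omega)
  rw [← hlam.2 _ _ (hdeg (hdiv n) (hmod m)) (hdeg (hdiv m) (hmod n))]
  refine Finset.sum_congr rfl fun i _ => ?_
  rw [hσ, mul_assoc, smallDigitNat, smallDigitNat,
    rsWord_X_pow_mul_pow hF hr (hdiv m) (hdiv n) (hmod m) (hmod n)]

theorem two_mul_mul_le_wt_of_mem_puncRS (hF : Fintype.card F = q ^ 2) (ha : Function.Injective a)
    (hr : r < q) (hqr : q ≤ 2 * r + 1) (hlam : lam ∈ puncRS q (r + s + 1) a) (h0 : lam ≠ 0) :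
    2 * ((r + 1) * (s + 1)) ≤ wt lam := by
  classical
  by_contra! hlt
  have hpos := wt_pos h0
  have hwt := wt_eq_wt_init_add lam
  have htop : (r + 1) * (s + 1) = s * (r + 1) + r + 1 := by ring
  have key := two_mul_card_le_wt_of_mem_puncRS hF ha hr hlam
  have hle (n : ℕ) : smallDigitNat q r n ≤ 2 * n := smallDigitNat_le_two_mul (by omega)
  by_cases hlast : lam (Fin.last _) = 0
  · rw [if_neg (not_not.2 hlast), add_zero] at hwt
    have := key (Finset.range (wt lam / 2 + 1)) fun n hn => by
      rw [Finset.mem_range] at hn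
      refine ⟨by omega, .inl ?_⟩
      rcases Nat.eq_zero_or_pos n with rfl | hn0
      · have := hle 0
        omega
      · have := smallDigitNat_lt_two_mul hqr hn0
        omega
    rw [Finset.card_range] at this
    omega
  · rw [if_pos hlast] at hwt
    have := key (insert (s * (r + 1) + r) (Finset.range (wt lam / 2))) fun n hn => by
      rcases Finset.mem_insert.1 hn with rfl | hn
      · exact ⟨le_rfl, .inr ⟨hlast, rfl⟩⟩
      · rw [Finset.mem_range] at hn
        have := hle n
        exact ⟨by omega, .inl (by omega)⟩
    rw [Finset.card_insert_of_notMem (by rw [Finset.mem_range]; omega), Finset.card_range] at this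
    omega

end LowerBound

/-! ### A word of minimum weight -/

section TraceWord

variable {F : Type} [Field F] {q k : ℕ} {a : Fin (q ^ 2) → F}

/-- The vector with entry `Tr W(x) = W(x) + W(x)^q` at each `x ∈ 𝔽_{q²}` and `0` in the last
coordinate; these vectors supply the short words of the puncture code. -/
noncomputable def traceWord (q : ℕ) (a : Fin (q ^ 2) → F) (W : F[X]) : Fin (q ^ 2 + 1) → F :=
  Fin.snoc (α := fun _ => F) (fun j => W.eval (a j) + W.eval (a j) ^ q) 0

lemma wt_traceWord (ha : Function.Bijective a) (W : F[X]) :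
    wt (traceWord q a W) = {x | W.eval x + W.eval x ^ q ≠ 0}.ncard := by
  classical
  rw [wt_eq_wt_init_add, traceWord, Fin.init_snoc, Fin.snoc_last, if_neg (not_not.2 rfl), add_zero,
    wt, ← Set.ncard_image_of_injective _ ha.1]
  congr 1
  exact Set.image_preimage_eq {x | W.eval x + W.eval x ^ q ≠ 0} ha.2

variable [Fintype F]

lemma traceWord_mem_puncRS (hF : Fintype.card F = q ^ 2) (ha : Function.Bijective a) {W : F[X]}
    (hW : W.natDegree + (q + 1) * (k - 1) < q ^ 2 - 1) : traceWord q a W ∈ puncRS q k a := by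
  obtain ⟨σ, hσ⟩ := exists_ringEquiv_eq_pow two_ne_zero hF
  have hsum {f g : F[X]} (hf : f.degree < k) (hg : g.degree < k) :
      ∑ x, (W * f * g ^ q).eval x = 0 := by
    refine sum_eval_eq_zero_of_natDegree_lt (hF ▸ lt_of_le_of_lt ?_ hW)
    calc (W * f * g ^ q).natDegree ≤ W.natDegree + (k - 1) + q * (k - 1) :=
          natDegree_mul_le_of_le (natDegree_mul_le_of_le le_rfl (natDegree_le_pred_of_degree_lt hf))
            (natDegree_pow_le_of_le q (natDegree_le_pred_of_degree_lt hg))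
      _ = W.natDegree + (q + 1) * (k - 1) := by ring
  refine ⟨fun i => ?_, fun f g hf hg => ?_⟩
  · rw [← hσ]
    cases i using Fin.lastCases with
    | cast j =>
      rw [traceWord, Fin.snoc_castSucc, map_add, hσ, hσ, pow_pow_eq_self hF, add_comm]
    | last => rw [traceWord, Fin.snoc_last, map_zero]
  · calc ∑ i, traceWord q a W i * rsWord q k a f i * rsWord q k a g i ^ q
        = ∑ x, (W.eval x + W.eval x ^ q) * f.eval x * g.eval x ^ q := by
          rw [Fin.sum_univ_castSucc]
          simp only [traceWord, Fin.snoc_castSucc, Fin.snoc_last, rsWord_castSucc, zero_mul,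
            add_zero]
          exact ha.sum_comp fun x => (W.eval x + W.eval x ^ q) * f.eval x * g.eval x ^ q
      _ = ∑ x, (W * f * g ^ q).eval x + σ (∑ x, (W * g * f ^ q).eval x) := by
          rw [map_sum, ← Finset.sum_add_distrib]
          refine Finset.sum_congr rfl fun x _ => ?_
          simp only [eval_mul, eval_pow, hσ, mul_pow, pow_pow_eq_self hF]
          ring
      _ = 0 := by rw [hsum hf hg, hsum hg hf, map_zero, add_zero]

end TraceWord

section MinWeight

variable {F : Type} [Field F] {h : ℕ}

/-- The polynomial `X^(h + 1) ∏_{c ∈ R} (X^(q + 1) - c)` for `q = 2h + 1`, whose trace word has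
minimum weight for a suitable set `R` of `h`-th roots of unity. -/
noncomputable def minWeightPoly (h : ℕ) (R : Finset F) : F[X] :=
  X ^ (h + 1) * ∏ c ∈ R, (X ^ (2 * h + 2) - C c)

lemma eval_minWeightPoly (R : Finset F) (x : F) :
    (minWeightPoly h R).eval x = x ^ (h + 1) * ∏ c ∈ R, (x ^ (2 * h + 2) - c) := by
  simp [minWeightPoly, eval_prod]

lemma natDegree_minWeightPoly_le (R : Finset F) :
    (minWeightPoly h R).natDegree ≤ h + 1 + R.card * (2 * h + 2) := by
  refine natDegree_mul_le.trans (add_le_add (natDegree_X_pow_le _) ?_)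
  refine (natDegree_prod_le _ _).trans ?_
  simp

variable [Fintype F] {R : Finset F}

lemma eval_minWeightPoly_pow (hF : Fintype.card F = (2 * h + 1) ^ 2) (hR : ∀ c ∈ R, c ^ h = 1)
    (x : F) : (minWeightPoly h R).eval x ^ (2 * h + 1) =
      (x ^ (2 * h + 2)) ^ h * (minWeightPoly h R).eval x := by
  obtain ⟨σ, hσ⟩ := exists_ringEquiv_eq_pow two_ne_zero hF
  have hnorm : σ (x ^ (2 * h + 2)) = x ^ (2 * h + 2) := by
    rw [pow_succ, map_mul, hσ x, hσ, pow_pow_eq_self hF, mul_comm]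
  have hfix : ∀ c ∈ R, σ c = c := fun c hc => by
    rw [hσ, pow_succ, mul_comm 2, pow_mul, hR c hc, one_pow, one_mul]
  have hprod : σ (∏ c ∈ R, (x ^ (2 * h + 2) - c)) = ∏ c ∈ R, (x ^ (2 * h + 2) - c) := by
    rw [map_prod]
    exact Finset.prod_congr rfl fun c hc => by rw [map_sub, hnorm, hfix c hc]
  rw [eval_minWeightPoly, ← hσ, map_mul, hprod, hσ]
  ring

lemma trace_minWeightPoly (hF : Fintype.card F = (2 * h + 1) ^ 2) (hR : ∀ c ∈ R, c ^ h = 1)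
    (x : F) : (minWeightPoly h R).eval x + (minWeightPoly h R).eval x ^ (2 * h + 1) =
      (1 + (x ^ (2 * h + 2)) ^ h) * (minWeightPoly h R).eval x := by
  rw [eval_minWeightPoly_pow hF hR]
  ring

lemma pow_eq_one_and_notMem_of_trace_minWeightPoly_ne_zero
    (hF : Fintype.card F = (2 * h + 1) ^ 2) (hR : ∀ c ∈ R, c ^ h = 1) {x : F}
    (hx : (minWeightPoly h R).eval x + (minWeightPoly h R).eval x ^ (2 * h + 1) ≠ 0) :
    (x ^ (2 * h + 2)) ^ h = 1 ∧ x ^ (2 * h + 2) ∉ R := by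
  rw [trace_minWeightPoly hF hR, mul_ne_zero_iff, eval_minWeightPoly, mul_ne_zero_iff] at hx
  obtain ⟨hplus, hpow, hprod⟩ := hx
  have hx0 : x ≠ 0 := by
    rintro rfl
    exact hpow (zero_pow h.succ_ne_zero)
  have hcard : (2 * h + 2) * (h * 2) = (2 * h + 1) ^ 2 - 1 := by
    rw [eq_tsub_iff_add_eq_of_le (Nat.one_le_pow _ _ (by omega))]
    ring
  have hsq : ((x ^ (2 * h + 2)) ^ h) ^ 2 = 1 := by
    rw [← pow_mul, ← pow_mul, hcard, ← hF, FiniteField.pow_card_sub_one_eq_one x hx0]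
  refine ⟨(sq_eq_one_iff.1 hsq).resolve_right fun hneg => ?_, fun hmem => ?_⟩
  · exact hplus (by rw [hneg, add_neg_cancel])
  · exact Finset.prod_ne_zero_iff.1 hprod _ hmem (sub_self _)

lemma trace_minWeightPoly_one_ne_zero (hF : Fintype.card F = (2 * h + 1) ^ 2)
    (hR : ∀ c ∈ R, c ^ h = 1) (h1 : 1 ∉ R) :
    (minWeightPoly h R).eval 1 + (minWeightPoly h R).eval 1 ^ (2 * h + 1) ≠ 0 := by
  have hchar : ringChar F ≠ 2 := fun htwo => by
    have hodd : Odd ((2 * h + 1) ^ 2) := (odd_two_mul_add_one h).pow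
    rw [← hF, Nat.odd_iff, FiniteField.even_card_iff_char_two.1 htwo] at hodd
    exact zero_ne_one hodd
  rw [trace_minWeightPoly hF hR, eval_minWeightPoly]
  simp only [one_pow, one_mul, one_add_one_eq_two]
  refine mul_ne_zero (Ring.two_ne_zero hchar) (Finset.prod_ne_zero_iff.2 fun c hc => ?_)
  exact sub_ne_zero.2 (ne_of_mem_of_not_mem hc h1).symm

theorem exists_mem_puncRS_wt_le (hF : Fintype.card F = (2 * h + 1) ^ 2)
    {a : Fin ((2 * h + 1) ^ 2) → F} (ha : Function.Bijective a) {s : ℕ} (hs : s < h) :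
    ∃ lam ∈ puncRS (2 * h + 1) (h + s + 1) a, lam ≠ 0 ∧ wt lam ≤ (s + 1) * (2 * h + 2) := by
  classical
  let U : Finset F := nthRootsFinset h 1
  have hU {c : F} : c ∈ U ↔ c ^ h = 1 := mem_nthRootsFinset (by omega) 1
  have hUcard : U.card ≤ h := (Multiset.toFinset_card_le _).trans (card_nthRoots h 1)
  have hU1 : 1 ∈ U := hU.2 (one_pow h)
  obtain ⟨T, hT1, hTU, hTcard⟩ : ∃ T : Finset F, {1} ⊆ T ∧ T ⊆ U ∧ T.card = min (s + 1) U.card :=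
    Finset.exists_subsuperset_card_eq (Finset.singleton_subset_iff.2 hU1)
      (le_min (Finset.card_singleton (1 : F) ▸ Nat.le_add_left 1 s)
        (Finset.card_le_card (Finset.singleton_subset_iff.2 hU1))) (min_le_right _ _)
  have hR : ∀ c ∈ U \ T, c ^ h = 1 := fun c hc => hU.1 (Finset.mem_sdiff.1 hc).1
  have h1R : 1 ∉ U \ T := fun h1 =>
    (Finset.mem_sdiff.1 h1).2 (Finset.singleton_subset_iff.1 hT1)
  refine ⟨traceWord (2 * h + 1) a (minWeightPoly h (U \ T)), traceWord_mem_puncRS hF ha ?_, ?_, ?_⟩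
  · have hRcard : (U \ T).card + s + 1 ≤ h := by
      rw [Finset.card_sdiff_of_subset hTU]
      omega
    have hdeg := natDegree_minWeightPoly_le (h := h) (U \ T)
    have hmul := Nat.mul_le_mul_right (2 * h + 2) hRcard
    rw [Nat.add_sub_cancel, Nat.lt_sub_iff_add_lt]
    nlinarith
  · intro hzero
    obtain ⟨j, hj⟩ := ha.2 1
    refine trace_minWeightPoly_one_ne_zero hF hR h1R ?_
    simpa [traceWord, hj] using congrFun hzero j.castSucc
  · rw [wt_traceWord ha]
    calc _ ≤ {x : F | x ^ (2 * h + 2) ∈ T}.ncard := by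
          refine Set.ncard_le_ncard (fun x hx => ?_) (Set.toFinite _)
          obtain ⟨hpow, hmem⟩ := pow_eq_one_and_notMem_of_trace_minWeightPoly_ne_zero hF hR hx
          by_contra hT
          exact hmem (Finset.mem_sdiff.2 ⟨hU.2 hpow, hT⟩)
      _ ≤ T.card * (2 * h + 2) := ncard_setOf_pow_mem_le (by omega) T
      _ ≤ (s + 1) * (2 * h + 2) := Nat.mul_le_mul_right _ (hTcard.trans_le (min_le_left _ _))

end MinWeight

/-- If `q` is odd and `(q+1)/2 ≤ k ≤ q-1`, then the minimum Hamming distance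
of the puncture code `P(C)` of the `[q²+1, k, q²+2-k]_{q²}` Reed-Solomon code `C` is exactly
`(q+1)(k - (q-1)/2)`. -/
theorem min_distance_puncture_RS_q_odd
    (q k : ℕ) (hq : IsPrimePow q) (hodd : Odd q) (hk1 : q + 1 ≤ 2 * k) (hk2 : k ≤ q - 1)
    (F : Type) [Field F] [Fintype F] (hF : Fintype.card F = q ^ 2)
    (a : Fin (q ^ 2) → F) (ha : Function.Bijective a) :
    (∃ lam ∈ puncRS q k a, lam ≠ 0 ∧ wt lam = (q + 1) * (k - (q - 1) / 2)) ∧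
    (∀ lam ∈ puncRS q k a, lam ≠ 0 → (q + 1) * (k - (q - 1) / 2) ≤ wt lam) := by
  obtain ⟨h, rfl⟩ := hodd
  obtain ⟨s, rfl⟩ : ∃ s, k = h + s + 1 := ⟨k - h - 1, by omega⟩
  have hd : (2 * h + 1 + 1) * (h + s + 1 - (2 * h + 1 - 1) / 2) = 2 * ((h + 1) * (s + 1)) := by
    rw [show h + s + 1 - (2 * h + 1 - 1) / 2 = s + 1 by omega]
    ring
  rw [hd]
  have hlower : ∀ lam ∈ puncRS (2 * h + 1) (h + s + 1) a, lam ≠ 0 →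
      2 * ((h + 1) * (s + 1)) ≤ wt lam := fun lam hlam h0 =>
    two_mul_mul_le_wt_of_mem_puncRS hF ha.1 (by omega) le_rfl hlam h0
  obtain ⟨lam, hlam, h0, hupper⟩ := exists_mem_puncRS_wt_le hF ha (s := s) (by omega)
  exact ⟨⟨lam, hlam, h0, le_antisymm (hupper.trans_eq (by ring)) (hlower lam hlam h0)⟩, hlower⟩
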